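/- arXiv:2412.07775 — 2 statements merged into one kernel-verified Lean document; each statement's English description precedes it below -/
import Mathlib

section
/- Let E = ℝ^d, T ≥ 1, β > 0, and Z > 0. For t = 0, …, T−1 let P_F^t, P_B^t : E × E → ℝ be strictly positive functions, differentiable in each argument, with ∫_E P_B^t(x | y) dx = 1 for every y ∈ E; let F_t : E → ℝ (t = 0, …, T) be strictly positive differentiable; let R : E → ℝ be strictly positive and differentiable; and let P_0 : E → ℝ be the initial probability density with F_0(x) = Z · P_0(x) for all x. Suppose for every t and all x, y ∈ E: (forward ∇-DB) ∇_y log P_F^t(y | x) = ∇_y log P_B^t(x | y) + ∇_y log F_{t+1}(y); (reverse ∇-DB) ∇_x log P_F^t(y | x) = ∇_x log P_B^t(x | y) − ∇_x log F_t(x); and (terminal) ∇ log F_T(x) = β · ∇ log R(x) for all x. Then, assuming all the iterated integrals below exist and are finite, the marginal density P_F(x_T) := ∫ … ∫ P_0(x_0) ∏_{t=0}^{T−1} P_F^t(x_{t+1} | x_t) dx_0 ⋯ dx_{T−1} satisfies P_F(x_T) = c · R(x_T)^β for some constant c > 0, i.e. the forward policy generates terminal samples with probability proportional to R^β. -/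
/-!
Matching log-gradients determine a positive function up to a positive factor, because the
space is connected (`const_of_gradient_eq`). Applied in `y` and then in `x`, this turns the two
∇-DB conditions into detailed balance up to a constant,
`F_t(x) P_F^t(y|x) = k_t F_{t+1}(y) P_B^t(x|y)`, and the terminal condition into `F_T = C R^β`.
Multiplied along a trajectory the flows telescope (`telescope`), so
`P_0(x_0) ∏ P_F^t = Z⁻¹ (∏ k_t) F_T(x_T) ∏ P_B^t`. The backward trajectory density integrates
to one, since the transitions can be integrated out successively (`lintegral_backward`); what
remains is a constant multiple of `R(x_T)^β`.
-/

open MeasureTheory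

/-- The marginal density of the terminal sample `z` of a Markovian sampler with initial
density `P0` and transition densities `P t x y` (density of going from `x` to `y` at step
`t`): the iterated integral `∫…∫ P0(x₀) ∏ₜ P_t(x_{t+1}|x_t) dx₀⋯dx_{T-1}`, written as a
single integral over the trajectory `(x₀,…,x_{T-1})` with `x_T = z`. -/
noncomputable def forwardMarginal {d T : ℕ}
    (P0 : EuclideanSpace ℝ (Fin d) → ℝ)
    (P : Fin T → EuclideanSpace ℝ (Fin d) → EuclideanSpace ℝ (Fin d) → ℝ)
    (z : EuclideanSpace ℝ (Fin d)) : ℝ :=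
  ∫ x : Fin T → EuclideanSpace ℝ (Fin d),
    P0 (Fin.snoc (α := fun _ => EuclideanSpace ℝ (Fin d)) x z 0) *
      ∏ t : Fin T, P t (Fin.snoc (α := fun _ => EuclideanSpace ℝ (Fin d)) x z t.castSucc)
        (Fin.snoc (α := fun _ => EuclideanSpace ℝ (Fin d)) x z t.succ)

/-- An affine relation between gradients integrates to the same relation between the
functions, up to an additive constant. -/
lemma const_of_gradient_eq {d : ℕ} {u v w : EuclideanSpace ℝ (Fin d) → ℝ} (a : ℝ)
    (hu : Differentiable ℝ u) (hv : Differentiable ℝ v) (hw : Differentiable ℝ w)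
    (h : ∀ x, gradient u x = gradient v x + a • gradient w x)
    (x y : EuclideanSpace ℝ (Fin d)) :
    u x - v x - a * w x = u y - v y - a * w y := by
  have hd : Differentiable ℝ (fun x => u x - v x - a * w x) :=
    (hu.sub hv).sub (hw.const_mul a)
  refine is_const_of_fderiv_eq_zero (𝕜 := ℝ) hd (fun x => ?_) x y
  have hx := h x
  have key : fderiv ℝ u x = fderiv ℝ v x + a • fderiv ℝ w x := by
    apply (InnerProductSpace.toDual ℝ (EuclideanSpace ℝ (Fin d))).symm.injective
    simpa [gradient] using hx
  have h1 : HasFDerivAt (fun x => u x - v x - a * w x)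
      (fderiv ℝ u x - fderiv ℝ v x - a • fderiv ℝ w x) x :=
    ((hu x).hasFDerivAt.sub (hv x).hasFDerivAt).sub ((hw x).hasFDerivAt.const_mul a)
  rw [h1.fderiv, key]
  abel

/-- Detailed balance up to the constants `k t` telescopes along a path `x`. -/
lemma telescope {E : Type*} {T : ℕ} (PF PB : Fin T → E → E → ℝ) (F : Fin (T + 1) → E → ℝ)
    (k : Fin T → ℝ) (hF : ∀ t x, 0 < F t x)
    (h : ∀ t x y, F t.castSucc x * PF t x y = k t * F t.succ y * PB t y x)
    (x : Fin (T + 1) → E) :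
    F 0 (x 0) * ∏ t : Fin T, PF t (x t.castSucc) (x t.succ)
      = (∏ t, k t) * F (Fin.last T) (x (Fin.last T))
        * ∏ t : Fin T, PB t (x t.succ) (x t.castSucc) := by
  have hprod : (∏ t : Fin T, F t.castSucc (x t.castSucc)) *
        ∏ t : Fin T, PF t (x t.castSucc) (x t.succ)
      = (∏ t, k t) * (∏ t : Fin T, F t.succ (x t.succ)) *
        ∏ t : Fin T, PB t (x t.succ) (x t.castSucc) := by
    simp only [← Finset.prod_mul_distrib, h]
  -- Both ways of splitting off an end factor of `∏ F t (x t)` over `Fin (T + 1)`.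
  have h1 := Fin.prod_univ_succ (fun t => F t (x t))
  rw [Fin.prod_univ_castSucc] at h1
  have hne : (∏ t : Fin T, F t.castSucc (x t.castSucc)) ≠ 0 :=
    Finset.prod_ne_zero_iff.2 fun t _ => (hF _ _).ne'
  apply mul_left_cancel₀ hne
  linear_combination (F 0 (x 0)) * hprod
    - (∏ t, k t) * (∏ t : Fin T, PB t (x t.succ) (x t.castSucc)) * h1

lemma measurable_snoc_apply {E : Type*} [MeasurableSpace E] {n : ℕ} (i : Fin (n + 1)) :
    Measurable (fun p : E × (Fin n → E) => Fin.snoc (α := fun _ => E) p.2 p.1 i) := by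
  induction i using Fin.lastCases with
  | last => simpa using measurable_fst
  | cast j => simpa [Function.comp_def] using (measurable_pi_apply j).comp measurable_snd

lemma measurable_backward {E : Type*} [MeasurableSpace E] {n : ℕ}
    (Q : Fin n → E → E → ENNReal) (hQ : ∀ t, Measurable (Function.uncurry (Q t))) :
    Measurable (fun p : E × (Fin n → E) => ∏ t : Fin n,
      Q t (Fin.snoc (α := fun _ => E) p.2 p.1 t.succ)
        (Fin.snoc (α := fun _ => E) p.2 p.1 t.castSucc)) :=
  Finset.measurable_prod _ fun t _ =>
    (hQ t).comp ((measurable_snoc_apply t.succ).prodMk (measurable_snoc_apply t.castSucc))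

/-- The density of the backward chain started at `z` has total mass one. The induction
splits off the last coordinate, so that the remaining path is again a backward chain, started
at that coordinate. -/
lemma lintegral_backward {E : Type*} [MeasureSpace E] [SigmaFinite (volume : Measure E)] :
    ∀ {n : ℕ} (Q : Fin n → E → E → ENNReal), (∀ t, Measurable (Function.uncurry (Q t))) →
      (∀ t y, ∫⁻ x, Q t y x = 1) → ∀ z : E,
      ∫⁻ x : Fin n → E, ∏ t : Fin n, Q t (Fin.snoc (α := fun _ => E) x z t.succ)
        (Fin.snoc (α := fun _ => E) x z t.castSucc) = 1 := by
  intro n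
  induction n with
  | zero =>
    intro Q _ _ z
    simp [volume_pi]
  | succ n ih =>
    intro Q hQ h1 z
    have hmp := (volume_preserving_piFinSuccAbove (fun _ : Fin (n + 1) => E)
      (Fin.last n)).symm
    rw [← hmp.lintegral_comp_emb (MeasurableEquiv.measurableEmbedding _)]
    have hstep : ∀ p : E × (Fin n → E),
        (∏ t : Fin (n + 1), Q t
          (Fin.snoc (α := fun _ => E) ((MeasurableEquiv.piFinSuccAbove
            (fun _ : Fin (n + 1) => E) (Fin.last n)).symm p) z t.succ)
          (Fin.snoc (α := fun _ => E) ((MeasurableEquiv.piFinSuccAbove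
            (fun _ : Fin (n + 1) => E) (Fin.last n)).symm p) z t.castSucc))
        = Q (Fin.last n) z p.1 * ∏ t : Fin n, Q t.castSucc
            (Fin.snoc (α := fun _ => E) p.2 p.1 t.succ)
            (Fin.snoc (α := fun _ => E) p.2 p.1 t.castSucc) := by
      intro p
      have he : (MeasurableEquiv.piFinSuccAbove
          (fun _ : Fin (n + 1) => E) (Fin.last n)).symm p
          = Fin.snoc (α := fun _ => E) p.2 p.1 := by
        exact Fin.insertNth_last' p.1 p.2
      rw [he, Fin.prod_univ_castSucc, mul_comm]
      congr 1
      · rw [Fin.succ_last, Fin.snoc_last, Fin.snoc_castSucc, Fin.snoc_last]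
      · refine Finset.prod_congr rfl fun t _ => ?_
        rw [Fin.succ_castSucc, Fin.snoc_castSucc, Fin.snoc_castSucc]
    simp_rw [hstep]
    have hm : Measurable (fun p : E × (Fin n → E) => Q (Fin.last n) z p.1 *
        ∏ t : Fin n, Q t.castSucc (Fin.snoc (α := fun _ => E) p.2 p.1 t.succ)
            (Fin.snoc (α := fun _ => E) p.2 p.1 t.castSucc)) :=
      (((hQ (Fin.last n)).comp (measurable_const.prodMk measurable_id)).comp
        measurable_fst).mul (measurable_backward (fun t => Q t.castSucc) fun t => hQ _)
    rw [Measure.volume_eq_prod, lintegral_prod _ hm.aemeasurable]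
    have hin : ∀ w : E, ∫⁻ x : Fin n → E, Q (Fin.last n) z w *
        ∏ t : Fin n, Q t.castSucc (Fin.snoc (α := fun _ => E) x w t.succ)
            (Fin.snoc (α := fun _ => E) x w t.castSucc) = Q (Fin.last n) z w := by
      intro w
      rw [lintegral_const_mul, ih (fun t => Q t.castSucc) (fun t => hQ _) (fun t => h1 _),
        mul_one]
      exact (measurable_backward (fun t => Q t.castSucc) fun t => hQ _).comp
        (measurable_const.prodMk measurable_id)
    simp_rw [hin]
    exact h1 _ z

/-- **Proposition 1.** If the forward and reverse ∇-DB conditions hold for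
all transitions together with the terminal condition `∇ log F_T = β ∇ log R`, then the
marginal of the forward policy is proportional to `R^β`.
Conventions: `PF t x y = P_F^t(y|x)`, `PB t y x = P_B^t(x|y)`. -/
theorem grad_DB_valid_gflownet {d T : ℕ} (hT : 1 ≤ T) (β Z : ℝ) (hβ : 0 < β) (hZ : 0 < Z)
    (PF PB : Fin T → EuclideanSpace ℝ (Fin d) → EuclideanSpace ℝ (Fin d) → ℝ)
    (F : Fin (T + 1) → EuclideanSpace ℝ (Fin d) → ℝ)
    (R P0 : EuclideanSpace ℝ (Fin d) → ℝ)
    (hPFpos : ∀ t x y, 0 < PF t x y) (hPBpos : ∀ t y x, 0 < PB t y x)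
    (hFpos : ∀ t x, 0 < F t x) (hRpos : ∀ x, 0 < R x)
    (hPFdiff₁ : ∀ t x, Differentiable ℝ (fun y => PF t x y))
    (hPFdiff₂ : ∀ t y, Differentiable ℝ (fun x => PF t x y))
    (hPBdiff₁ : ∀ t x, Differentiable ℝ (fun y => PB t y x))
    (hPBdiff₂ : ∀ t y, Differentiable ℝ (fun x => PB t y x))
    (hFdiff : ∀ t, Differentiable ℝ (F t)) (hRdiff : Differentiable ℝ R)
    (hPFmeas : ∀ t, Measurable (Function.uncurry (PF t)))
    (hPBmeas : ∀ t, Measurable (Function.uncurry (PB t)))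
    (hP0meas : Measurable P0)
    (hPBnorm : ∀ t y, ∫ x, PB t y x = 1)
    (hF0 : ∀ x, F 0 x = Z * P0 x)
    (hfwd : ∀ (t : Fin T) (x y : EuclideanSpace ℝ (Fin d)),
      gradient (fun y' => Real.log (PF t x y')) y
        = gradient (fun y' => Real.log (PB t y' x)) y
          + gradient (fun y' => Real.log (F t.succ y')) y)
    (hrev : ∀ (t : Fin T) (x y : EuclideanSpace ℝ (Fin d)),
      gradient (fun x' => Real.log (PF t x' y)) x
        = gradient (fun x' => Real.log (PB t y x')) x
          - gradient (fun x' => Real.log (F t.castSucc x')) x)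
    (hterm : ∀ x : EuclideanSpace ℝ (Fin d),
      gradient (fun x' => Real.log (F (Fin.last T) x')) x
        = β • gradient (fun x' => Real.log (R x')) x)
    (hInt : ∀ z : EuclideanSpace ℝ (Fin d),
      Integrable (fun x : Fin T → EuclideanSpace ℝ (Fin d) =>
        P0 (Fin.snoc (α := fun _ => EuclideanSpace ℝ (Fin d)) x z 0) *
          ∏ t : Fin T, PF t (Fin.snoc (α := fun _ => EuclideanSpace ℝ (Fin d)) x z t.castSucc)
            (Fin.snoc (α := fun _ => EuclideanSpace ℝ (Fin d)) x z t.succ))) :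
    ∃ c : ℝ, 0 < c ∧ ∀ z, forwardMarginal P0 PF z = c * R z ^ β := by
  have hlog : ∀ {f : EuclideanSpace ℝ (Fin d) → ℝ}, Differentiable ℝ f → (∀ x, 0 < f x) →
      Differentiable ℝ (fun x => Real.log (f x)) :=
    fun hf hpos => hf.log fun x => (hpos x).ne'
  -- Detailed balance up to a constant, with the constant read off at the origin.
  have hDB : ∀ t : Fin T, ∃ k : ℝ, 0 < k ∧ ∀ x y,
      F t.castSucc x * PF t x y = k * F t.succ y * PB t y x := by
    intro t
    have h1 : ∀ x y, _ := fun x y => const_of_gradient_eq 1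
      (hlog (hPFdiff₁ t x) (hPFpos t x)) (hlog (hPBdiff₁ t x) fun y => hPBpos t y x)
      (hlog (hFdiff t.succ) (hFpos t.succ))
      (fun y => by rw [one_smul]; exact hfwd t x y) y 0
    have h2 : ∀ x, _ := fun x => const_of_gradient_eq (-1)
      (hlog (hPFdiff₂ t 0) fun x => hPFpos t x 0) (hlog (hPBdiff₂ t 0) (hPBpos t 0))
      (hlog (hFdiff t.castSucc) (hFpos t.castSucc))
      (fun x => by rw [neg_one_smul, ← sub_eq_add_neg]; exact hrev t x 0) x 0
    refine ⟨Real.exp (Real.log (PF t 0 0) - Real.log (PB t 0 0)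
      + Real.log (F t.castSucc 0) - Real.log (F t.succ 0)), Real.exp_pos _, fun x y => ?_⟩
    have h1' := h1 x y
    have h2' := h2 x
    apply Real.log_injOn_pos
      (Set.mem_Ioi.2 (mul_pos (hFpos _ _) (hPFpos _ _ _)))
      (Set.mem_Ioi.2 (mul_pos (mul_pos (Real.exp_pos _) (hFpos _ _)) (hPBpos _ _ _)))
    rw [Real.log_mul (hFpos _ _).ne' (hPFpos _ _ _).ne',
      Real.log_mul (mul_pos (Real.exp_pos _) (hFpos _ _)).ne' (hPBpos _ _ _).ne',
      Real.log_mul (Real.exp_pos _).ne' (hFpos _ _).ne', Real.log_exp]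
    linarith
  choose k hk hDB using hDB
  obtain ⟨C, hC, hFT⟩ : ∃ C : ℝ, 0 < C ∧ ∀ z, F (Fin.last T) z = C * R z ^ β := by
    have h := fun z => const_of_gradient_eq β (hlog (hFdiff (Fin.last T)) (hFpos _))
      (differentiable_const (0 : ℝ)) (hlog hRdiff hRpos)
      (fun x => by rw [hterm x]; simp [gradient]) z 0
    refine ⟨Real.exp (Real.log (F (Fin.last T) 0) - β * Real.log (R 0)), Real.exp_pos _,
      fun z => ?_⟩
    have hz := h z
    rw [Real.rpow_def_of_pos (hRpos z), ← Real.exp_add, ← Real.exp_log (hFpos (Fin.last T) z)]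
    congr 1
    linarith
  refine ⟨Z⁻¹ * (∏ t, k t) * C,
    mul_pos (mul_pos (inv_pos.2 hZ) (Finset.prod_pos fun t _ => hk t)) hC, fun z => ?_⟩
  have hone : ∫ x : Fin T → EuclideanSpace ℝ (Fin d),
      ∏ t : Fin T, PB t (Fin.snoc (α := fun _ => EuclideanSpace ℝ (Fin d)) x z t.succ)
        (Fin.snoc (α := fun _ => EuclideanSpace ℝ (Fin d)) x z t.castSucc) = 1 := by
    have hmeas : Measurable fun x : Fin T → EuclideanSpace ℝ (Fin d) =>
        ∏ t : Fin T, PB t (Fin.snoc (α := fun _ => EuclideanSpace ℝ (Fin d)) x z t.succ)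
          (Fin.snoc (α := fun _ => EuclideanSpace ℝ (Fin d)) x z t.castSucc) :=
      Finset.measurable_prod _ fun t _ => (hPBmeas t).comp
        (((measurable_snoc_apply t.succ).prodMk (measurable_snoc_apply t.castSucc)).comp
          (measurable_const.prodMk measurable_id))
    rw [integral_eq_lintegral_of_nonneg_ae
      (Filter.Eventually.of_forall fun x => Finset.prod_nonneg fun t _ => (hPBpos _ _ _).le)
      hmeas.aestronglyMeasurable]
    simp_rw [ENNReal.ofReal_prod_of_nonneg fun t _ => (hPBpos _ _ _).le]
    rw [lintegral_backward (fun t y x => ENNReal.ofReal (PB t y x))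
      (fun t => (hPBmeas t).ennreal_ofReal), ENNReal.toReal_one]
    intro t y
    -- Integrability of `PB t y` comes from its integral being nonzero.
    have hi : Integrable (PB t y) := by
      by_contra hni
      have := hPBnorm t y
      rw [integral_undef hni] at this
      exact zero_ne_one this
    rw [← ofReal_integral_eq_lintegral_ofReal hi
      (Filter.Eventually.of_forall fun x => (hPBpos t y x).le), hPBnorm, ENNReal.ofReal_one]
  have hpt : ∀ x : Fin T → EuclideanSpace ℝ (Fin d),
      P0 (Fin.snoc (α := fun _ => EuclideanSpace ℝ (Fin d)) x z 0) *
        ∏ t : Fin T, PF t (Fin.snoc (α := fun _ => EuclideanSpace ℝ (Fin d)) x z t.castSucc)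
          (Fin.snoc (α := fun _ => EuclideanSpace ℝ (Fin d)) x z t.succ)
      = (Z⁻¹ * (∏ t, k t) * C * R z ^ β) *
        ∏ t : Fin T, PB t (Fin.snoc (α := fun _ => EuclideanSpace ℝ (Fin d)) x z t.succ)
          (Fin.snoc (α := fun _ => EuclideanSpace ℝ (Fin d)) x z t.castSucc) := by
    intro x
    have h := telescope PF PB F k hFpos hDB
      (Fin.snoc (α := fun _ => EuclideanSpace ℝ (Fin d)) x z)
    rw [hF0, Fin.snoc_last, hFT] at h
    apply mul_left_cancel₀ hZ.ne'
    rw [← mul_assoc, h]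
    field_simp
  unfold forwardMarginal
  simp_rw [hpt]
  rw [integral_const_mul, hone, mul_one]
end

section
/- Let E = ℝ^d, T ≥ 1, β > 0. For t = 0, …, T−1 let P_F^t (finetuned forward policy), P_F^{#,t} (pretrained forward policy), and P_B^t (shared backward policy) be strictly positive functions E × E → ℝ, differentiable in each argument, with ∫_E P_B^t(x | y) dx = 1 for every y; let F̃_t : E → ℝ (t = 0, …, T) be strictly positive differentiable residual flow functions with F̃_0 constant; let R : E → ℝ be strictly positive differentiable; and let P_0 be the shared initial probability density. Suppose for every t and all x, y ∈ E: (forward residual ∇-DB) ∇_y log P_F^t(y | x) − ∇_y log P_F^{#,t}(y | x) = ∇_y log F̃_{t+1}(y); (reverse residual ∇-DB) ∇_x log P_F^t(y | x) − ∇_x log P_F^{#,t}(y | x) = −∇_x log F̃_t(x); and (terminal) ∇ log F̃_T(x) = β ∇ log R(x) for all x. Then, assuming all the iterated integrals exist and are finite, the finetuned marginal P_F(x_T) := ∫ P_0(x_0) ∏_{t=0}^{T−1} P_F^t(x_{t+1} | x_t) dx_{0:T−1} satisfies P_F(x_T) = c · R(x_T)^β · P_F^#(x_T) for some constant c > 0,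 where P_F^#(x_T) := ∫ P_0(x_0) ∏_{t=0}^{T−1} P_F^{#,t}(x_{t+1} | x_t) dx_{0:T−1} is the pretrained marginal. -/
/-!
Both residual conditions are gradient identities on the connected space `E`, so they integrate:
`log P_F^t(y|x) - log P_F^{#,t}(y|x) - log F̃_{t+1}(y) + log F̃_t(x)` depends neither on `y`
(forward condition) nor on `x` (reverse condition). Hence there are constants `k_t > 0` with
`P_F^t(y|x) = k_t · P_F^{#,t}(y|x) · F̃_{t+1}(y) / F̃_t(x)` (`exists_policy_ratio`). Along a
trajectory the flow ratios telescope to `F̃_T(x_T) / F̃_0(x_0)`, where `F̃_0` is constant and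
`F̃_T = κ · R^β` by the terminal condition (`exists_terminal_const`). The integrands of the two
marginals therefore differ by a factor depending on `x_T` only, which leaves the integral.
-/

open MeasureTheory

/-- On an inner product space, functions whose gradients satisfy `∇f - ∇g = a ∇h` everywhere
satisfy `f - g = a h + const`. -/
lemma sub_sub_eq_of_gradient {E : Type*} [NormedAddCommGroup E] [InnerProductSpace ℝ E]
    [CompleteSpace E] {f g h : E → ℝ} {a : ℝ} (hf : Differentiable ℝ f)
    (hg : Differentiable ℝ g) (hh : Differentiable ℝ h)
    (H : ∀ x, gradient f x - gradient g x = a • gradient h x) (x y : E) :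
    f x - g x - a * h x = f y - g y - a * h y := by
  have key : ∀ x, HasFDerivAt (fun x => f x - g x - a * h x) (0 : E →L[ℝ] ℝ) x := by
    intro x
    have hd := ((hf x).hasFDerivAt.sub (hg x).hasFDerivAt).sub
      ((hh x).hasFDerivAt.const_mul a)
    have e : fderiv ℝ f x - fderiv ℝ g x - a • fderiv ℝ h x = 0 := by
      have := congrArg (InnerProductSpace.toDual ℝ E) (H x)
      simpa [gradient, sub_eq_zero] using this
    rw [e] at hd
    exact hd
  exact is_const_of_fderiv_eq_zero (𝕜 := ℝ) (fun x => (key x).differentiableAt)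
    (fun x => (key x).fderiv) x y

/-- The forward and reverse residual conditions at one time step determine the policy up to a
positive constant: `p(y|x) = k · q(y|x) · v(y) / u(x)`. -/
lemma exists_policy_ratio {E : Type*} [NormedAddCommGroup E] [InnerProductSpace ℝ E]
    [CompleteSpace E] {p q : E → E → ℝ} {u v : E → ℝ}
    (hp : ∀ x y, 0 < p x y) (hq : ∀ x y, 0 < q x y) (hu : ∀ x, 0 < u x) (hv : ∀ x, 0 < v x)
    (hp₁ : ∀ x, Differentiable ℝ (fun y => p x y)) (hp₂ : ∀ y, Differentiable ℝ (fun x => p x y))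
    (hq₁ : ∀ x, Differentiable ℝ (fun y => q x y)) (hq₂ : ∀ y, Differentiable ℝ (fun x => q x y))
    (hud : Differentiable ℝ u) (hvd : Differentiable ℝ v)
    (hfwd : ∀ x y, gradient (fun y' => Real.log (p x y')) y
      - gradient (fun y' => Real.log (q x y')) y = gradient (fun y' => Real.log (v y')) y)
    (hrev : ∀ x y, gradient (fun x' => Real.log (p x' y)) x
      - gradient (fun x' => Real.log (q x' y)) x = - gradient (fun x' => Real.log (u x')) x) :
    ∃ k : ℝ, 0 < k ∧ ∀ x y, p x y = k * q x y * (v y / u x) := by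
  refine ⟨p 0 0 / q 0 0 / v 0 * u 0,
    mul_pos (div_pos (div_pos (hp 0 0) (hq 0 0)) (hv 0)) (hu 0), fun x y => ?_⟩
  have h1 := sub_sub_eq_of_gradient (a := 1) ((hp₁ x).log fun y => (hp x y).ne')
    ((hq₁ x).log fun y => (hq x y).ne') (hvd.log fun y => (hv y).ne')
    (fun y => by rw [one_smul]; exact hfwd x y) y 0
  have h2 := sub_sub_eq_of_gradient (a := -1) ((hp₂ 0).log fun x => (hp x 0).ne')
    ((hq₂ 0).log fun x => (hq x 0).ne') (hud.log fun x => (hu x).ne')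
    (fun x => by rw [neg_one_smul]; exact hrev x 0) x 0
  have a1 := (hp x y).ne'
  have a2 := (hq x y).ne'
  have a3 := (hp 0 0).ne'
  have a4 := (hq 0 0).ne'
  have a5 := (hu x).ne'
  have a6 := (hu 0).ne'
  have a7 := (hv y).ne'
  have a8 := (hv 0).ne'
  have hpos : 0 < p 0 0 / q 0 0 / v 0 * u 0 * q x y * (v y / u x) :=
    mul_pos (mul_pos (mul_pos (div_pos (div_pos (hp 0 0) (hq 0 0)) (hv 0)) (hu 0)) (hq x y))
      (div_pos (hv y) (hu x))
  apply Real.log_injOn_pos (hp x y) hpos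
  rw [Real.log_mul (by positivity) (by positivity), Real.log_mul (by positivity) a2,
    Real.log_mul (by positivity) a6, Real.log_div (by positivity) a8, Real.log_div a3 a4,
    Real.log_div a7 a5]
  linarith

/-- The terminal condition `∇ log u = β ∇ log r` integrates to `u = κ r^β`. -/
lemma exists_terminal_const {E : Type*} [NormedAddCommGroup E] [InnerProductSpace ℝ E]
    [CompleteSpace E] {u r : E → ℝ} {β : ℝ} (hu : ∀ x, 0 < u x) (hr : ∀ x, 0 < r x)
    (hud : Differentiable ℝ u) (hrd : Differentiable ℝ r)
    (H : ∀ x, gradient (fun x' => Real.log (u x')) x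
      = β • gradient (fun x' => Real.log (r x')) x) :
    ∃ κ : ℝ, 0 < κ ∧ ∀ x, u x = κ * r x ^ β := by
  have hpow : ∀ x, 0 < r x ^ β := fun x => Real.rpow_pos_of_pos (hr x) β
  refine ⟨u 0 / r 0 ^ β, div_pos (hu 0) (hpow 0), fun x => ?_⟩
  have h1 := sub_sub_eq_of_gradient (a := β) (g := fun _ => (0 : ℝ)) (hud.log fun x => (hu x).ne')
    (differentiable_const _) (hrd.log fun x => (hr x).ne')
    (fun x => by rw [H x]; simp [gradient]) x 0
  apply Real.log_injOn_pos (hu x) (mul_pos (div_pos (hu 0) (hpow 0)) (hpow x))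
  rw [Real.log_mul (div_pos (hu 0) (hpow 0)).ne' (hpow x).ne',
    Real.log_div (hu 0).ne' (hpow 0).ne', Real.log_rpow (hr x), Real.log_rpow (hr 0)]
  linarith

lemma prod_succ_div_castSucc {n : ℕ} (w : Fin (n + 1) → ℝ) (hw : ∀ i, w i ≠ 0) :
    ∏ t : Fin n, w t.succ / w t.castSucc = w (Fin.last n) / w 0 := by
  rw [Finset.prod_div_distrib,
    div_eq_div_iff (Finset.prod_ne_zero_iff.2 fun i _ => hw _) (hw 0), mul_comm,
    ← Fin.prod_univ_succ, Fin.prod_univ_castSucc, mul_comm]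

/-- **Proposition 2.** Validity of the residual ∇-DB objective: if the
forward and reverse residual ∇-DB conditions hold together with the terminal condition
`∇ log F̃_T = β ∇ log R`, and the residual flow at time `0` is constant, then the
finetuned marginal is proportional to `R^β` times the pretrained marginal.
Conventions: `PF t x y = P_F^t(y|x)` (finetuned), `PFs t x y = P_F^{#,t}(y|x)`
(pretrained), `PB t y x = P_B^t(x|y)` (shared backward policy), `Ftil t` the residual
flow. -/
theorem residual_grad_DB_valid {d T : ℕ} (hT : 1 ≤ T) (β : ℝ) (hβ : 0 < β)
    (PF PFs PB : Fin T → EuclideanSpace ℝ (Fin d) → EuclideanSpace ℝ (Fin d) → ℝ)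
    (Ftil : Fin (T + 1) → EuclideanSpace ℝ (Fin d) → ℝ)
    (R P0 : EuclideanSpace ℝ (Fin d) → ℝ)
    (hPFpos : ∀ t x y, 0 < PF t x y) (hPFspos : ∀ t x y, 0 < PFs t x y)
    (hPBpos : ∀ t y x, 0 < PB t y x)
    (hFtilpos : ∀ t x, 0 < Ftil t x) (hRpos : ∀ x, 0 < R x)
    (hPFdiff₁ : ∀ t x, Differentiable ℝ (fun y => PF t x y))
    (hPFdiff₂ : ∀ t y, Differentiable ℝ (fun x => PF t x y))
    (hPFsdiff₁ : ∀ t x, Differentiable ℝ (fun y => PFs t x y))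
    (hPFsdiff₂ : ∀ t y, Differentiable ℝ (fun x => PFs t x y))
    (hPBdiff₁ : ∀ t x, Differentiable ℝ (fun y => PB t y x))
    (hPBdiff₂ : ∀ t y, Differentiable ℝ (fun x => PB t y x))
    (hFtildiff : ∀ t, Differentiable ℝ (Ftil t)) (hRdiff : Differentiable ℝ R)
    (hPFmeas : ∀ t, Measurable (Function.uncurry (PF t)))
    (hPFsmeas : ∀ t, Measurable (Function.uncurry (PFs t)))
    (hP0meas : Measurable P0)
    (hP0nonneg : ∀ x, 0 ≤ P0 x) (hP0norm : ∫ x, P0 x = 1)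
    (hPBnorm : ∀ t y, ∫ x, PB t y x = 1)
    (hFtil0 : ∃ c₀ : ℝ, ∀ x, Ftil 0 x = c₀)
    (hfwd : ∀ (t : Fin T) (x y : EuclideanSpace ℝ (Fin d)),
      gradient (fun y' => Real.log (PF t x y')) y
          - gradient (fun y' => Real.log (PFs t x y')) y
        = gradient (fun y' => Real.log (Ftil t.succ y')) y)
    (hrev : ∀ (t : Fin T) (x y : EuclideanSpace ℝ (Fin d)),
      gradient (fun x' => Real.log (PF t x' y)) x
          - gradient (fun x' => Real.log (PFs t x' y)) x
        = - gradient (fun x' => Real.log (Ftil t.castSucc x')) x)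
    (hterm : ∀ x : EuclideanSpace ℝ (Fin d),
      gradient (fun x' => Real.log (Ftil (Fin.last T) x')) x
        = β • gradient (fun x' => Real.log (R x')) x)
    (hInt : ∀ z : EuclideanSpace ℝ (Fin d),
      Integrable (fun x : Fin T → EuclideanSpace ℝ (Fin d) =>
        P0 (Fin.snoc (α := fun _ => EuclideanSpace ℝ (Fin d)) x z 0) *
          ∏ t : Fin T, PF t (Fin.snoc (α := fun _ => EuclideanSpace ℝ (Fin d)) x z t.castSucc)
            (Fin.snoc (α := fun _ => EuclideanSpace ℝ (Fin d)) x z t.succ)))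
    (hInts : ∀ z : EuclideanSpace ℝ (Fin d),
      Integrable (fun x : Fin T → EuclideanSpace ℝ (Fin d) =>
        P0 (Fin.snoc (α := fun _ => EuclideanSpace ℝ (Fin d)) x z 0) *
          ∏ t : Fin T, PFs t (Fin.snoc (α := fun _ => EuclideanSpace ℝ (Fin d)) x z t.castSucc)
            (Fin.snoc (α := fun _ => EuclideanSpace ℝ (Fin d)) x z t.succ))) :
    ∃ c : ℝ, 0 < c ∧ ∀ z, forwardMarginal P0 PF z = c * R z ^ β * forwardMarginal P0 PFs z := by
  choose k hk hkeq using fun t => exists_policy_ratio (hPFpos t) (hPFspos t)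
    (hFtilpos t.castSucc) (hFtilpos t.succ) (hPFdiff₁ t) (hPFdiff₂ t) (hPFsdiff₁ t)
    (hPFsdiff₂ t) (hFtildiff t.castSucc) (hFtildiff t.succ) (hfwd t) (hrev t)
  obtain ⟨κ, hκ, hκeq⟩ := exists_terminal_const (hFtilpos (Fin.last T)) hRpos
    (hFtildiff (Fin.last T)) hRdiff hterm
  obtain ⟨c₀, hc₀⟩ := hFtil0
  have hc₀pos : 0 < c₀ := hc₀ 0 ▸ hFtilpos 0 0
  refine ⟨(∏ t, k t) * κ / c₀,
    div_pos (mul_pos (Finset.prod_pos fun t _ => hk t) hκ) hc₀pos, fun z => ?_⟩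
  unfold forwardMarginal
  rw [← integral_const_mul]
  refine integral_congr_ae (Filter.Eventually.of_forall fun x => ?_)
  -- The flow evaluated along the trajectory, whose step ratios telescope.
  have htel := prod_succ_div_castSucc
    (fun s => Ftil s (Fin.snoc (α := fun _ => EuclideanSpace ℝ (Fin d)) x z s))
    (fun s => (hFtilpos s _).ne')
  simp only [Fin.snoc_last, hc₀, hκeq] at htel
  simp only [hkeq]
  rw [Finset.prod_mul_distrib, Finset.prod_mul_distrib, htel]
  ring
end
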